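/- Let a ∈ ℝ, let I_f be an interval with least element a, nonempty interior, and I_f ⊂ [a,∞), let Ω ⊂ ℝ^m be a nonempty open set, let α = (α₁,…,α_m) ∈ (0,1]^m, let q_a ∈ Ω, and let f : Ω × I_f → ℝ^m be a Carathéodory function that is bounded on compacts and locally Lipschitz continuous in its first variable. If (q,I) is a maximal solution of the Caputo Cauchy problem ( _cD^{α_i}_{a+}[q_i] = f_i(q(·),·) a.e., q(a) = q_a ) and (q,I) is not global (I ≠ I_f), then I = [a,b) for some b ∈ I_f with b > a, and q cannot be continuously extended at t = b with a value in Ω: there is no ξ ∈ Ω such that q(t) → ξ as t → b⁻. -/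

import Mathlib

open MeasureTheory Set

/-- Left Riemann–Liouville fractional integral of order `α` with base point `a`
(for `α = 0` it is the identity). -/
noncomputable def rlInt (a α : ℝ) (q : ℝ → ℝ) (t : ℝ) : ℝ :=
  if α = 0 then q t else (1 / Real.Gamma α) * ∫ τ in a..t, (t - τ) ^ (α - 1) * q τ

/-- `I` is an interval with least element `a`, nonempty interior, and `I ⊆ [a,∞)`. -/
def IsIntervalFrom (a : ℝ) (I : Set ℝ) : Prop :=
  a ∈ I ∧ I ⊆ Set.Ici a ∧ (interior I).Nonempty ∧ I.OrdConnected

/-- `(q, I)` is a local solution of the Caputo Cauchy problem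
`_cD^{α_i}_{a+}[q_i] = F_i(q(·),·)` a.e., `q(a) = qa`, on the domain `Ω`:
`I ⊆ If` is an interval with least element `a` and nonempty interior, `q` is continuous
on `I` with values in `Ω` and `q(a) = qa`, and for each `i` the function
`I^{1-α_i}_{a+}[q_i - (qa)_i]` agrees a.e. on `I` with a locally absolutely continuous
function `t ↦ c + ∫_a^t h` whose derivative `h` (the Caputo fractional derivative of
`q_i`) equals `F_i(q(t), t)` for almost every `t ∈ I`. -/
def IsCaputoLocalSol (a : ℝ) (If : Set ℝ) {m : ℕ}
    (Ω : Set (EuclideanSpace ℝ (Fin m))) (α : Fin m → ℝ)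
    (qa : EuclideanSpace ℝ (Fin m))
    (F : EuclideanSpace ℝ (Fin m) → ℝ → EuclideanSpace ℝ (Fin m))
    (q : ℝ → EuclideanSpace ℝ (Fin m)) (I : Set ℝ) : Prop :=
  IsIntervalFrom a I ∧ I ⊆ If ∧ ContinuousOn q I ∧ (∀ t ∈ I, q t ∈ Ω) ∧ q a = qa ∧
  ∀ i, ∃ c : ℝ, ∃ h : ℝ → ℝ,
    (∀ b ∈ I, MeasureTheory.IntegrableOn h (Set.Icc a b)) ∧
    (∀ᵐ t ∂(MeasureTheory.volume.restrict I),
      rlInt a (1 - α i) (fun τ => q τ i - qa i) t = c + ∫ τ in a..t, h τ) ∧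
    (∀ᵐ t ∂(MeasureTheory.volume.restrict I), h t = F (q t) t i)

/-- `(q, I)` is a maximal local solution of the Caputo Cauchy problem:
every extension `(q', I')` of it satisfies `I' = I`. -/
def IsMaximalSol (a : ℝ) (If : Set ℝ) {m : ℕ}
    (Ω : Set (EuclideanSpace ℝ (Fin m))) (α : Fin m → ℝ)
    (qa : EuclideanSpace ℝ (Fin m))
    (F : EuclideanSpace ℝ (Fin m) → ℝ → EuclideanSpace ℝ (Fin m))
    (q : ℝ → EuclideanSpace ℝ (Fin m)) (I : Set ℝ) : Prop :=
  IsCaputoLocalSol a If Ω α qa F q I ∧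
  ∀ (q' : ℝ → EuclideanSpace ℝ (Fin m)) (I' : Set ℝ),
    IsCaputoLocalSol a If Ω α qa F q' I' → I ⊆ I' → Set.EqOn q' q I → I' = I

/-!
A local solution is the same as a solution of the Volterra equation `q = qa + I^α [F (q, ·)]`: one
passes back and forth with the semigroup law `I^(1-α) I^α = I^1` and the injectivity of `I^γ` on
continuous functions. Along a curve staying in a compact part of `Ω` the right-hand side is
essentially bounded, so its fractional integral is Hölder continuous, up to the endpoint `b`.

If the domain of a solution were `[a, b]` with `b` not the right end of `If`, the Hölder bound makes
the Volterra operator a contraction on the continuations of `q` to a short `[a, c]`, `c > b`, where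
the history on `[a, b]` is frozen; its fixed point is a proper extension. If the domain is `[a, b)`
and `q t → ξ ∈ Ω`, then `q` extended by `ξ` solves the equation on `[a, b]`. Both contradict
maximality.
-/

/-- `u` is almost everywhere strongly measurable on `s` and bounded there by `M`: the class of
right-hand sides whose fractional integrals are continuous. The bound is kept explicit because the
Hölder constants below depend on it. -/
structure AEBoundedOn {E : Type*} [NormedAddCommGroup E] (u : ℝ → E) (M : ℝ) (s : Set ℝ) :
    Prop where
  aestronglyMeasurable : AEStronglyMeasurable u (volume.restrict s)
  ae_norm_le : ∀ᵐ t ∂volume.restrict s, ‖u t‖ ≤ M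

namespace AEBoundedOn

variable {E : Type*} [NormedAddCommGroup E] {u : ℝ → E} {M : ℝ} {s s' : Set ℝ}

theorem mono (hu : AEBoundedOn u M s) (hs : s' ⊆ s) : AEBoundedOn u M s' :=
  ⟨hu.aestronglyMeasurable.mono_set hs, ae_restrict_of_ae_restrict_of_subset hs hu.ae_norm_le⟩

theorem nonneg {a c : ℝ} (hu : AEBoundedOn u M (Icc a c)) (hac : a < c) : 0 ≤ M := by
  have : NeZero (volume.restrict (Icc a c)) := ⟨by simp [Measure.restrict_eq_zero, hac]⟩
  obtain ⟨t, ht⟩ := hu.ae_norm_le.exists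
  exact (norm_nonneg _).trans ht

theorem integrableOn {x y : ℝ} (hu : AEBoundedOn u M (Icc x y)) : IntegrableOn u (Icc x y) :=
  .of_bound measure_Icc_lt_top hu.aestronglyMeasurable M hu.ae_norm_le

theorem intervalIntegrable {x y : ℝ} (hu : AEBoundedOn u M (Icc x y)) (hxy : x ≤ y) :
    IntervalIntegrable u volume x y :=
  (intervalIntegrable_iff_integrableOn_Icc_of_le hxy).2 hu.integrableOn

theorem apply {ι : Type*} [Fintype ι] {g : ℝ → EuclideanSpace ℝ ι} (hg : AEBoundedOn g M s)
    (i : ι) : AEBoundedOn (fun t => g t i) M s where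
  aestronglyMeasurable :=
    (EuclideanSpace.proj (𝕜 := ℝ) i).continuous.comp_aestronglyMeasurable hg.aestronglyMeasurable
  ae_norm_le := hg.ae_norm_le.mono fun t ht => (PiLp.norm_apply_le (g t) i).trans ht

end AEBoundedOn

/-! ### The Riemann–Liouville integral -/

theorem intervalIntegrable_sub_rpow {β : ℝ} (hβ : 0 < β) (t x y : ℝ) :
    IntervalIntegrable (fun τ => (t - τ) ^ (β - 1)) volume x y := by
  simpa using (intervalIntegral.intervalIntegrable_rpow' (a := t - x) (b := t - y)
    (r := β - 1) (by linarith)).comp_sub_left t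

theorem integral_sub_rpow {β : ℝ} (hβ : 0 < β) (t x y : ℝ) :
    ∫ τ in x..y, (t - τ) ^ (β - 1) = ((t - x) ^ β - (t - y) ^ β) / β := by
  rw [intervalIntegral.integral_comp_sub_left (fun s => s ^ (β - 1)) t,
    integral_rpow (Or.inl (by linarith)), sub_add_cancel]

theorem AEBoundedOn.intervalIntegrable_sub_rpow_mul {β M x y : ℝ} {u : ℝ → ℝ} (hβ : 0 < β)
    (hu : AEBoundedOn u M (Icc x y)) (hxy : x ≤ y) (t : ℝ) :
    IntervalIntegrable (fun τ => (t - τ) ^ (β - 1) * u τ) volume x y := by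
  have hk := intervalIntegrable_sub_rpow hβ t x y
  rw [intervalIntegrable_iff_integrableOn_Icc_of_le hxy] at hk ⊢
  exact hk.mul_bdd hu.aestronglyMeasurable hu.ae_norm_le

theorem rlInt_zero (a : ℝ) (u : ℝ → ℝ) : rlInt a 0 u = u := by
  funext t
  exact if_pos rfl

theorem rlInt_of_pos {β : ℝ} (hβ : 0 < β) (a : ℝ) (u : ℝ → ℝ) (t : ℝ) :
    rlInt a β u t = (Real.Gamma β)⁻¹ * ∫ τ in a..t, (t - τ) ^ (β - 1) * u τ := by
  rw [rlInt, if_neg hβ.ne', one_div]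

theorem rlInt_one (a : ℝ) (u : ℝ → ℝ) (t : ℝ) : rlInt a 1 u t = ∫ τ in a..t, u τ := by
  simp [rlInt_of_pos one_pos]

theorem rlInt_self {a : ℝ} {u : ℝ → ℝ} (hu : u a = 0) (β : ℝ) : rlInt a β u a = 0 := by
  simp [rlInt, hu]

theorem rlInt_congr {a t : ℝ} {u v : ℝ → ℝ} (hat : a ≤ t) (h : EqOn u v (Icc a t)) (β : ℝ) :
    rlInt a β u t = rlInt a β v t := by
  have hint : ∫ τ in a..t, (t - τ) ^ (β - 1) * u τ = ∫ τ in a..t, (t - τ) ^ (β - 1) * v τ := by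
    refine intervalIntegral.integral_congr fun τ hτ => ?_
    rw [uIcc_of_le hat] at hτ
    simp only [h hτ]
  simp only [rlInt, hint, h (right_mem_Icc.2 hat)]

theorem rlInt_sub {a β M N t : ℝ} {u v : ℝ → ℝ} (hβ : 0 < β) (hat : a ≤ t)
    (hu : AEBoundedOn u M (Icc a t)) (hv : AEBoundedOn v N (Icc a t)) :
    rlInt a β (fun τ => u τ - v τ) t = rlInt a β u t - rlInt a β v t := by
  simp only [rlInt_of_pos hβ, mul_sub]
  rw [intervalIntegral.integral_sub (hu.intervalIntegrable_sub_rpow_mul hβ hat t)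
    (hv.intervalIntegrable_sub_rpow_mul hβ hat t), mul_sub]

section Holder

variable {a β M s t : ℝ} {u : ℝ → ℝ}

theorem abs_integral_sub_rpow_mul_le (hβ : 0 < β) (hst : s ≤ t) (hu : AEBoundedOn u M (Icc s t)) :
    |∫ τ in s..t, (t - τ) ^ (β - 1) * u τ| ≤ M / β * (t - s) ^ β := by
  have hle : ∀ᵐ τ, τ ∈ Ioc s t → ‖(t - τ) ^ (β - 1) * u τ‖ ≤ (t - τ) ^ (β - 1) * M := by
    filter_upwards [(ae_restrict_iff' measurableSet_Icc).1 hu.ae_norm_le] with τ huτ hτ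
    have hk : 0 ≤ (t - τ) ^ (β - 1) := Real.rpow_nonneg (sub_nonneg.2 hτ.2) _
    rw [norm_mul, Real.norm_of_nonneg hk]
    exact mul_le_mul_of_nonneg_left (huτ (Ioc_subset_Icc_self hτ)) hk
  calc |∫ τ in s..t, (t - τ) ^ (β - 1) * u τ|
      ≤ ∫ τ in s..t, (t - τ) ^ (β - 1) * M :=
        intervalIntegral.norm_integral_le_of_norm_le hst hle
          ((intervalIntegrable_sub_rpow hβ t s t).mul_const M)
    _ = M / β * (t - s) ^ β := by
        rw [intervalIntegral.integral_mul_const, integral_sub_rpow hβ, sub_self,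
          Real.zero_rpow hβ.ne']
        ring

theorem abs_integral_sub_rpow_sub_mul_le (hβ : 0 < β) (hβ1 : β ≤ 1) (hM : 0 ≤ M) (has : a ≤ s)
    (hst : s ≤ t) (hu : AEBoundedOn u M (Icc a s)) :
    |∫ τ in a..s, ((t - τ) ^ (β - 1) - (s - τ) ^ (β - 1)) * u τ| ≤ M / β * (t - s) ^ β := by
  have hle : ∀ᵐ τ, τ ∈ Ioc a s → ‖((t - τ) ^ (β - 1) - (s - τ) ^ (β - 1)) * u τ‖ ≤
      ((s - τ) ^ (β - 1) - (t - τ) ^ (β - 1)) * M := by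
    filter_upwards [(ae_restrict_iff' measurableSet_Icc).1 hu.ae_norm_le,
      Measure.ae_ne volume s] with τ huτ hne hτ
    have hτs : τ < s := lt_of_le_of_ne hτ.2 hne
    have hk : (t - τ) ^ (β - 1) ≤ (s - τ) ^ (β - 1) :=
      Real.rpow_le_rpow_of_nonpos (by linarith) (by linarith) (by linarith)
    rw [norm_mul, norm_sub_rev, Real.norm_of_nonneg (sub_nonneg.2 hk)]
    exact mul_le_mul_of_nonneg_left (huτ (Ioc_subset_Icc_self hτ)) (sub_nonneg.2 hk)
  have hks := intervalIntegrable_sub_rpow hβ s a s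
  have hkt := intervalIntegrable_sub_rpow hβ t a s
  have hmono : (s - a) ^ β ≤ (t - a) ^ β := Real.rpow_le_rpow (by linarith) (by linarith) hβ.le
  calc |∫ τ in a..s, ((t - τ) ^ (β - 1) - (s - τ) ^ (β - 1)) * u τ|
      ≤ ∫ τ in a..s, ((s - τ) ^ (β - 1) - (t - τ) ^ (β - 1)) * M :=
        intervalIntegral.norm_integral_le_of_norm_le has hle ((hks.sub hkt).mul_const M)
    _ = M / β * ((t - s) ^ β - ((t - a) ^ β - (s - a) ^ β)) := by
        rw [intervalIntegral.integral_mul_const, intervalIntegral.integral_sub hks hkt,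
          integral_sub_rpow hβ, integral_sub_rpow hβ, sub_self, Real.zero_rpow hβ.ne']
        ring
    _ ≤ M / β * (t - s) ^ β := by
        gcongr
        linarith

theorem abs_rlInt_sub_rlInt_le (hβ : 0 < β) (hβ1 : β ≤ 1) (has : a ≤ s) (hst : s ≤ t)
    (hu : AEBoundedOn u M (Icc a t)) :
    |rlInt a β u t - rlInt a β u s| ≤ 2 * M * ((t - s) ^ β / Real.Gamma (β + 1)) := by
  rcases hst.eq_or_lt with rfl | hlt
  · simp [Real.zero_rpow hβ.ne']
  have hM : 0 ≤ M := hu.nonneg (has.trans_lt hlt)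
  have hus : AEBoundedOn u M (Icc a s) := hu.mono (Icc_subset_Icc_right hst)
  have hust : AEBoundedOn u M (Icc s t) := hu.mono (Icc_subset_Icc_left has)
  have hΓ : 0 < Real.Gamma β := Real.Gamma_pos_of_pos hβ
  have hsplit : (∫ τ in a..t, (t - τ) ^ (β - 1) * u τ) - ∫ τ in a..s, (s - τ) ^ (β - 1) * u τ =
      (∫ τ in a..s, ((t - τ) ^ (β - 1) - (s - τ) ^ (β - 1)) * u τ) +
        ∫ τ in s..t, (t - τ) ^ (β - 1) * u τ := by
    simp only [sub_mul]
    rw [intervalIntegral.integral_sub (hus.intervalIntegrable_sub_rpow_mul hβ has t)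
      (hus.intervalIntegrable_sub_rpow_mul hβ has s), sub_add_eq_add_sub,
      intervalIntegral.integral_add_adjacent_intervals
        (hus.intervalIntegrable_sub_rpow_mul hβ has t)
        (hust.intervalIntegrable_sub_rpow_mul hβ hst t)]
  calc |rlInt a β u t - rlInt a β u s|
      = (Real.Gamma β)⁻¹ * |(∫ τ in a..s, ((t - τ) ^ (β - 1) - (s - τ) ^ (β - 1)) * u τ) +
          ∫ τ in s..t, (t - τ) ^ (β - 1) * u τ| := by
        rw [rlInt_of_pos hβ, rlInt_of_pos hβ, ← mul_sub, hsplit, abs_mul,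
          abs_of_pos (inv_pos.2 hΓ)]
    _ ≤ (Real.Gamma β)⁻¹ * (M / β * (t - s) ^ β + M / β * (t - s) ^ β) := by
        gcongr
        exact (abs_add_le _ _).trans (add_le_add
          (abs_integral_sub_rpow_sub_mul_le hβ hβ1 hM has hst hus)
          (abs_integral_sub_rpow_mul_le hβ hst hust))
    _ = 2 * M * ((t - s) ^ β / Real.Gamma (β + 1)) := by
        rw [Real.Gamma_add_one hβ.ne']
        field_simp
        ring

theorem continuousOn_rlInt {c : ℝ} (hβ : 0 < β) (hβ1 : β ≤ 1) (hu : AEBoundedOn u M (Icc a c)) :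
    ContinuousOn (rlInt a β u) (Icc a c) := by
  intro s hs
  set C : ℝ → ℝ := fun h => 2 * M * (h ^ β / Real.Gamma (β + 1))
  have hbound : ∀ t ∈ Icc a c, ‖rlInt a β u t - rlInt a β u s‖ ≤ C |t - s| := by
    intro t ht
    rcases le_total s t with h | h
    · rw [abs_of_nonneg (sub_nonneg.2 h)]
      exact abs_rlInt_sub_rlInt_le hβ hβ1 hs.1 h (hu.mono (Icc_subset_Icc_right ht.2))
    · rw [norm_sub_rev, abs_sub_comm, abs_of_nonneg (sub_nonneg.2 h)]
      exact abs_rlInt_sub_rlInt_le hβ hβ1 ht.1 h (hu.mono (Icc_subset_Icc_right hs.2))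
  have hC : Continuous fun t => C |t - s| := by
    have := Real.continuous_rpow_const hβ.le
    fun_prop
  have hlim : Filter.Tendsto (fun t => C |t - s|) (nhdsWithin s (Icc a c)) (nhds 0) := by
    simpa [C, Real.zero_rpow hβ.ne'] using (hC.tendsto s).mono_left nhdsWithin_le_nhds
  rw [ContinuousWithinAt, tendsto_iff_norm_sub_tendsto_zero]
  exact squeeze_zero' (.of_forall fun t => norm_nonneg _)
    (eventually_nhdsWithin_of_forall hbound) hlim

end Holder

theorem exists_aeBoundedOn_of_continuousOn {E : Type*} [NormedAddCommGroup E] {u : ℝ → E}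
    {s : Set ℝ} (hs : IsCompact s) (hu : ContinuousOn u s) : ∃ M, AEBoundedOn u M s := by
  obtain ⟨M, hM⟩ := hs.exists_bound_of_continuousOn hu
  exact ⟨M, hu.aestronglyMeasurable_of_isCompact hs hs.measurableSet,
    ae_restrict_of_forall_mem hs.measurableSet hM⟩

theorem continuousOn_rlInt_of_continuousOn {a c β : ℝ} {u : ℝ → ℝ} (hβ : 0 ≤ β) (hβ1 : β ≤ 1)
    (hu : ContinuousOn u (Icc a c)) : ContinuousOn (rlInt a β u) (Icc a c) := by
  rcases hβ.eq_or_lt with rfl | hβ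
  · rwa [rlInt_zero]
  · obtain ⟨M, hM⟩ := exists_aeBoundedOn_of_continuousOn isCompact_Icc hu
    exact continuousOn_rlInt hβ hβ1 hM

theorem eqOn_of_forall_integral_eq {a c : ℝ} (hac : a < c) {g u : ℝ → ℝ}
    (hg : ContinuousOn g (Icc a c)) (hu : ContinuousOn u (Icc a c))
    (h : ∀ t ∈ Icc a c, ∫ τ in a..t, g τ = ∫ τ in a..t, u τ) : EqOn g u (Icc a c) := by
  have hderiv : ∀ {w : ℝ → ℝ}, ContinuousOn w (Icc a c) → ∀ t ∈ Icc a c,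
      HasDerivWithinAt (fun x => ∫ τ in a..x, w τ) (w t) (Icc a c) t := by
    intro w hw t ht
    have : Fact (t ∈ Icc a c) := ⟨ht⟩
    have hwt : IntervalIntegrable w volume a t :=
      (hw.mono (by rw [uIcc_of_le ht.1]; exact Icc_subset_Icc_right ht.2)).intervalIntegrable
    exact intervalIntegral.integral_hasDerivWithinAt_right hwt
      (hw.stronglyMeasurableAtFilter_nhdsWithin measurableSet_Icc t) (hw t ht)
  intro t ht
  exact (uniqueDiffOn_Icc hac t ht).eq_deriv _ (hderiv hg t ht)
    ((hderiv hu t ht).congr h (h t ht))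

section Semigroup

open ProbabilityTheory in
theorem integral_sub_rpow_mul_sub_rpow {β γ τ t : ℝ} (hβ : 0 < β) (hγ : 0 < γ) (h : τ < t) :
    ∫ s in τ..t, (t - s) ^ (β - 1) * (s - τ) ^ (γ - 1) =
      beta γ β * (t - τ) ^ (β + γ - 1) := by
  have hr : 0 < t - τ := sub_pos.2 h
  have hscaled : ((∫ x in (0 : ℝ)..(t - τ), x ^ (γ - 1) * (t - τ - x) ^ (β - 1) : ℝ) : ℂ) =
      ((t - τ) ^ (γ + β - 1) : ℝ) * Complex.betaIntegral γ β := by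
    rw [← intervalIntegral.integral_ofReal, Complex.ofReal_cpow hr.le]
    push_cast
    rw [← Complex.ofReal_sub, ← Complex.betaIntegral_scaled _ _ hr]
    refine intervalIntegral.integral_congr fun x hx => ?_
    rw [uIcc_of_le hr.le] at hx
    simp only [Complex.ofReal_cpow hx.1, Complex.ofReal_cpow (sub_nonneg.2 hx.2)]
    push_cast
    rfl
  calc ∫ s in τ..t, (t - s) ^ (β - 1) * (s - τ) ^ (γ - 1)
      = ∫ x in (0 : ℝ)..(t - τ), x ^ (γ - 1) * (t - τ - x) ^ (β - 1) := by
        rw [← sub_self τ, ← intervalIntegral.integral_comp_sub_right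
          (fun x : ℝ => x ^ (γ - 1) * (t - τ - x) ^ (β - 1)) τ]
        simp only [sub_sub_sub_cancel_right, mul_comm]
    _ = beta γ β * (t - τ) ^ (β + γ - 1) := by
        rw [← Complex.ofReal_re (∫ x in (0 : ℝ)..(t - τ), _), hscaled, Complex.re_ofReal_mul,
          beta_eq_betaIntegralReal γ β hγ hβ, mul_comm, add_comm γ]

theorem intervalIntegrable_sub_rpow_mul_sub_rpow {β γ τ t : ℝ} (hβ : 0 < β) (hγ : 0 < γ)
    (h : τ < t) :
    IntervalIntegrable (fun s => (t - s) ^ (β - 1) * (s - τ) ^ (γ - 1)) volume τ t := by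
  apply intervalIntegral.intervalIntegrable_of_integral_ne_zero
  rw [integral_sub_rpow_mul_sub_rpow hβ hγ h]
  exact (mul_pos (ProbabilityTheory.beta_pos hγ hβ) (Real.rpow_pos_of_pos (sub_pos.2 h) _)).ne'

theorem restrict_Ioc_restrict_Ioi {a t τ : ℝ} (hτ : τ ∈ Ioc a t) :
    (volume.restrict (Ioc a t)).restrict (Ioi τ) = volume.restrict (Ioc τ t) := by
  rw [Measure.restrict_restrict measurableSet_Ioi, inter_comm, Ioc_inter_Ioi,
    sup_eq_right.2 hτ.1.le]

theorem integral_integral_swap_triangle {E : Type*} [NormedAddCommGroup E] [NormedSpace ℝ E]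
    {a t : ℝ} (hat : a ≤ t) {f : ℝ → ℝ → E}
    (hf : IntegrableOn (fun z : ℝ × ℝ => f z.1 z.2) {z | z.2 < z.1}
      ((volume.restrict (Ioc a t)).prod (volume.restrict (Ioc a t)))) :
    ∫ s in a..t, ∫ τ in a..s, f s τ = ∫ τ in a..t, ∫ s in τ..t, f s τ := by
  set μ := volume.restrict (Ioc a t) with hμ
  have hmeas : MeasurableSet {z : ℝ × ℝ | z.2 < z.1} :=
    measurableSet_lt measurable_snd measurable_fst
  have hinner : ∀ s ∈ Ioc a t, ∫ τ, (Iio s).indicator (f s) τ ∂μ = ∫ τ in a..s, f s τ := by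
    intro s hs
    have hIoo : Iio s ∩ Ioc a t = Ioo a s := by grind
    rw [integral_indicator measurableSet_Iio, hμ, Measure.restrict_restrict measurableSet_Iio,
      hIoo, restrict_Ioo_eq_restrict_Ioc, intervalIntegral.integral_of_le hs.1.le]
  have houter : ∀ τ ∈ Ioc a t,
      ∫ s, (Ioi τ).indicator (fun s => f s τ) s ∂μ = ∫ s in τ..t, f s τ := by
    intro τ hτ
    rw [integral_indicator measurableSet_Ioi, restrict_Ioc_restrict_Ioi hτ,
      intervalIntegral.integral_of_le hτ.2]
  calc ∫ s in a..t, ∫ τ in a..s, f s τ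
      = ∫ s, ∫ τ, (Iio s).indicator (f s) τ ∂μ ∂μ := by
        rw [intervalIntegral.integral_of_le hat]
        exact (setIntegral_congr_fun measurableSet_Ioc hinner).symm
    _ = ∫ τ, ∫ s, (Ioi τ).indicator (fun s => f s τ) s ∂μ ∂μ :=
        integral_integral_swap ((integrable_indicator_iff hmeas).2 hf)
    _ = ∫ τ in a..t, ∫ s in τ..t, f s τ := by
        rw [intervalIntegral.integral_of_le hat]
        exact setIntegral_congr_fun measurableSet_Ioc houter

variable {a β γ t : ℝ} {u : ℝ → ℝ}

theorem aestronglyMeasurable_of_sub_rpow_mul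
    (hu : IntegrableOn (fun τ => (t - τ) ^ β * u τ) (Ioc a t)) :
    AEStronglyMeasurable u (volume.restrict (Ioc a t)) := by
  have hk : Measurable fun τ : ℝ => ((t - τ) ^ β)⁻¹ := by fun_prop
  refine (hk.aestronglyMeasurable.mul hu.aestronglyMeasurable).congr ?_
  filter_upwards [ae_restrict_mem measurableSet_Ioc,
    ae_restrict_of_ae (Measure.ae_ne volume t)] with τ hτ hne
  have hpos : 0 < (t - τ) ^ β :=
    Real.rpow_pos_of_pos (sub_pos.2 (lt_of_le_of_ne hτ.2 hne)) _
  exact inv_mul_cancel_left₀ hpos.ne' _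

theorem integral_norm_sub_rpow_mul_sub_rpow_mul {τ : ℝ} (hβ : 0 < β) (hγ : 0 < γ) (h : τ < t)
    (x : ℝ) :
    ∫ s in τ..t, ‖(t - s) ^ (β - 1) * (s - τ) ^ (γ - 1) * x‖ =
      ProbabilityTheory.beta γ β * ‖(t - τ) ^ (β + γ - 1) * x‖ := by
  have hnorm : ∀ s ∈ uIcc τ t, ‖(t - s) ^ (β - 1) * (s - τ) ^ (γ - 1) * x‖ =
      (t - s) ^ (β - 1) * (s - τ) ^ (γ - 1) * ‖x‖ := by
    intro s hs
    rw [uIcc_of_le h.le] at hs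
    rw [norm_mul, Real.norm_of_nonneg (mul_nonneg (Real.rpow_nonneg (sub_nonneg.2 hs.2) _)
      (Real.rpow_nonneg (sub_nonneg.2 hs.1) _))]
  rw [intervalIntegral.integral_congr hnorm, intervalIntegral.integral_mul_const,
    integral_sub_rpow_mul_sub_rpow hβ hγ h, norm_mul,
    Real.norm_of_nonneg (Real.rpow_nonneg (sub_nonneg.2 h.le) _), mul_assoc]

theorem integrableOn_triangle_sub_rpow_mul (hβ : 0 < β) (hγ : 0 < γ)
    (hu : IntegrableOn (fun τ => (t - τ) ^ (β + γ - 1) * u τ) (Ioc a t)) :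
    IntegrableOn (fun z : ℝ × ℝ => (t - z.1) ^ (β - 1) * (z.1 - z.2) ^ (γ - 1) * u z.2)
      {z | z.2 < z.1} ((volume.restrict (Ioc a t)).prod (volume.restrict (Ioc a t))) := by
  set μ := volume.restrict (Ioc a t)
  have hS : MeasurableSet {z : ℝ × ℝ | z.2 < z.1} :=
    measurableSet_lt measurable_snd measurable_fst
  have hk : Measurable fun z : ℝ × ℝ => (t - z.1) ^ (β - 1) * (z.1 - z.2) ^ (γ - 1) := by fun_prop
  have hmeas : AEStronglyMeasurable
      (fun z : ℝ × ℝ => (t - z.1) ^ (β - 1) * (z.1 - z.2) ^ (γ - 1) * u z.2) (μ.prod μ) :=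
    hk.aestronglyMeasurable.mul (aestronglyMeasurable_of_sub_rpow_mul hu).comp_snd
  have hlt : ∀ᵐ τ ∂μ, τ ∈ Ioc a t ∧ τ < t := by
    filter_upwards [ae_restrict_mem measurableSet_Ioc,
      ae_restrict_of_ae (Measure.ae_ne volume t)] with τ hτ hne
    exact ⟨hτ, lt_of_le_of_ne hτ.2 hne⟩
  rw [← integrable_indicator_iff hS, integrable_prod_iff' (hmeas.indicator hS)]
  constructor
  · filter_upwards [hlt] with τ ⟨hτ, hτt⟩
    change Integrable ((Ioi τ).indicator
      fun s => (t - s) ^ (β - 1) * (s - τ) ^ (γ - 1) * u τ) μ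
    rw [integrable_indicator_iff measurableSet_Ioi, IntegrableOn, restrict_Ioc_restrict_Ioi hτ]
    exact ((intervalIntegrable_sub_rpow_mul_sub_rpow hβ hγ hτt).1).mul_const _
  · refine (hu.norm.const_mul (ProbabilityTheory.beta γ β)).congr ?_
    filter_upwards [hlt] with τ ⟨hτ, hτt⟩
    symm
    calc ∫ s, ‖{z : ℝ × ℝ | z.2 < z.1}.indicator
            (fun z => (t - z.1) ^ (β - 1) * (z.1 - z.2) ^ (γ - 1) * u z.2) (s, τ)‖ ∂μ
        = ∫ s, (Ioi τ).indicator
            (fun s => ‖(t - s) ^ (β - 1) * (s - τ) ^ (γ - 1) * u τ‖) s ∂μ := by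
          simp only [norm_indicator_eq_indicator_norm]
          rfl
      _ = ∫ s in τ..t, ‖(t - s) ^ (β - 1) * (s - τ) ^ (γ - 1) * u τ‖ := by
          rw [integral_indicator measurableSet_Ioi, restrict_Ioc_restrict_Ioi hτ,
            ← intervalIntegral.integral_of_le hτ.2]
      _ = ProbabilityTheory.beta γ β * ‖(t - τ) ^ (β + γ - 1) * u τ‖ :=
          integral_norm_sub_rpow_mul_sub_rpow_mul hβ hγ hτt _

theorem rlInt_rlInt (hβ : 0 < β) (hγ : 0 < γ) (hat : a ≤ t)
    (hu : IntervalIntegrable (fun τ => (t - τ) ^ (β + γ - 1) * u τ) volume a t) :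
    rlInt a β (rlInt a γ u) t = rlInt a (β + γ) u t := by
  have hleft : ∫ s in a..t, (t - s) ^ (β - 1) * ∫ τ in a..s, (s - τ) ^ (γ - 1) * u τ =
      ∫ s in a..t, ∫ τ in a..s, (t - s) ^ (β - 1) * (s - τ) ^ (γ - 1) * u τ := by
    simp only [mul_assoc, intervalIntegral.integral_const_mul]
  have hright : ∫ τ in a..t, ∫ s in τ..t, (t - s) ^ (β - 1) * (s - τ) ^ (γ - 1) * u τ =
      ProbabilityTheory.beta γ β * ∫ τ in a..t, (t - τ) ^ (β + γ - 1) * u τ := by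
    rw [← intervalIntegral.integral_const_mul]
    refine intervalIntegral.integral_congr_ae ?_
    filter_upwards [Measure.ae_ne volume t] with τ hne hτ
    rw [uIoc_of_le hat] at hτ
    rw [intervalIntegral.integral_mul_const,
      integral_sub_rpow_mul_sub_rpow hβ hγ (lt_of_le_of_ne hτ.2 hne), mul_assoc]
  have hswap := integral_integral_swap_triangle
    (f := fun s τ => (t - s) ^ (β - 1) * (s - τ) ^ (γ - 1) * u τ) hat
    (integrableOn_triangle_sub_rpow_mul hβ hγ hu.1)
  have hΓβ := (Real.Gamma_pos_of_pos hβ).ne'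
  have hΓγ := (Real.Gamma_pos_of_pos hγ).ne'
  calc rlInt a β (rlInt a γ u) t
      = (Real.Gamma β)⁻¹ * (Real.Gamma γ)⁻¹ *
          ∫ s in a..t, (t - s) ^ (β - 1) * ∫ τ in a..s, (s - τ) ^ (γ - 1) * u τ := by
        simp only [rlInt_of_pos hβ, rlInt_of_pos hγ, mul_left_comm _ (Real.Gamma γ)⁻¹,
          intervalIntegral.integral_const_mul, mul_assoc]
    _ = (Real.Gamma β)⁻¹ * (Real.Gamma γ)⁻¹ *
          (ProbabilityTheory.beta γ β * ∫ τ in a..t, (t - τ) ^ (β + γ - 1) * u τ) := by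
        rw [hleft, hswap, hright]
    _ = rlInt a (β + γ) u t := by
        rw [rlInt_of_pos (add_pos hβ hγ), ProbabilityTheory.beta, add_comm γ]
        field_simp

theorem rlInt_one_sub_rlInt {α : ℝ} (hα : 0 < α) (hα1 : α ≤ 1) (hat : a ≤ t)
    (hu : IntervalIntegrable u volume a t) :
    rlInt a (1 - α) (rlInt a α u) t = ∫ τ in a..t, u τ := by
  rcases hα1.eq_or_lt with rfl | hα1
  · rw [sub_self, rlInt_zero, rlInt_one]
  · rw [rlInt_rlInt (sub_pos.2 hα1) hα hat (by simpa using hu), sub_add_cancel, rlInt_one]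

theorem eqOn_of_eqOn_rlInt {c : ℝ} {g : ℝ → ℝ} (hγ : 0 ≤ γ) (hγ1 : γ < 1) (hac : a < c)
    (hg : ContinuousOn g (Icc a c)) (hu : ContinuousOn u (Icc a c))
    (h : EqOn (rlInt a γ g) (rlInt a γ u) (Icc a c)) : EqOn g u (Icc a c) := by
  rcases hγ.eq_or_lt with rfl | hγ
  · simpa only [rlInt_zero] using h
  have hprim : ∀ {w : ℝ → ℝ}, ContinuousOn w (Icc a c) → ∀ t ∈ Icc a c,
      rlInt a (1 - γ) (rlInt a γ w) t = ∫ τ in a..t, w τ := fun hw t ht =>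
    rlInt_one_sub_rlInt hγ hγ1.le ht.1
      ((hw.mono (Icc_subset_Icc_right ht.2)).intervalIntegrable_of_Icc ht.1)
  refine eqOn_of_forall_integral_eq hac hg hu fun t ht => ?_
  rw [← hprim hg t ht, ← hprim hu t ht,
    rlInt_congr ht.1 (h.mono (Icc_subset_Icc_right ht.2))]

end Semigroup

/-! ### The Volterra equation -/

theorem eqOn_rlInt_of_ae_rlInt_one_sub_eq {a c α d M : ℝ} {g h : ℝ → ℝ} (hα : 0 < α)
    (hα1 : α ≤ 1) (hac : a < c) (hg : ContinuousOn g (Icc a c)) (hga : g a = 0)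
    (hh : AEBoundedOn h M (Icc a c))
    (heq : ∀ᵐ t ∂volume.restrict (Icc a c),
      rlInt a (1 - α) g t = d + ∫ τ in a..t, h τ) :
    EqOn g (rlInt a α h) (Icc a c) := by
  have ha : a ∈ Icc a c := left_mem_Icc.2 hac.le
  have hprim : ContinuousOn (fun t => ∫ τ in a..t, h τ) (Icc a c) :=
    (continuousOn_rlInt one_pos le_rfl hh).congr fun t _ => (rlInt_one a h t).symm
  have heq' : EqOn (rlInt a (1 - α) g) (fun t => d + ∫ τ in a..t, h τ) (Icc a c) :=
    Measure.eqOn_Icc_of_ae_eq volume hac.ne heq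
      (continuousOn_rlInt_of_continuousOn (by linarith) (by linarith) hg)
      (continuousOn_const.add hprim)
  have hd : d = 0 := by simpa [rlInt_self hga] using (heq' ha).symm
  subst hd
  refine eqOn_of_eqOn_rlInt (sub_nonneg.2 hα1) (by linarith) hac hg
    (continuousOn_rlInt hα hα1 hh) fun t ht => (heq' ht).trans ?_
  exact (zero_add _).trans (rlInt_one_sub_rlInt hα hα1 ht.1
    ((hh.mono (Icc_subset_Icc_right ht.2)).intervalIntegrable ht.1)).symm

theorem rlInt_one_sub_eq_integral_of_eqOn_rlInt {a c α M : ℝ} {g h : ℝ → ℝ} (hα : 0 < α)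
    (hα1 : α ≤ 1) (hh : AEBoundedOn h M (Icc a c)) (heq : EqOn g (rlInt a α h) (Icc a c)) :
    ∀ t ∈ Icc a c, rlInt a (1 - α) g t = ∫ τ in a..t, h τ := by
  intro t ht
  have hts : Icc a t ⊆ Icc a c := Icc_subset_Icc_right ht.2
  rw [rlInt_congr ht.1 (heq.mono hts),
    rlInt_one_sub_rlInt hα hα1 ht.1 ((hh.mono hts).intervalIntegrable ht.1)]

/-! ### Carathéodory functions -/

section Superposition

variable {T X Y : Type*} [MeasurableSpace T] {μ : Measure T} [TopologicalSpace Y]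
  [TopologicalSpace.PseudoMetrizableSpace Y] {F : X → T → Y}

theorem aestronglyMeasurable_superposition_simpleFunc [MeasurableSpace X] (p : SimpleFunc T X)
    (hF : ∀ t, AEStronglyMeasurable (F (p t)) μ) :
    AEStronglyMeasurable (fun t => F (p t) t) μ := by
  have hcover : ⋃ x : p.range, p ⁻¹' {x.1} = univ :=
    iUnion_eq_univ_iff.2 fun t => ⟨⟨p t, p.mem_range_self t⟩, rfl⟩
  rw [← Measure.restrict_univ (μ := μ), ← hcover, aestronglyMeasurable_iUnion_iff]
  rintro ⟨x, hx⟩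
  obtain ⟨t₀, rfl⟩ := SimpleFunc.mem_range.1 hx
  refine (hF t₀).restrict.congr ?_
  filter_upwards [ae_restrict_mem (p.measurableSet_fiber (p t₀))] with t ht
  rw [show p t = p t₀ from ht]

theorem aestronglyMeasurable_superposition [PseudoEMetricSpace X] [SecondCountableTopology X]
    [MeasurableSpace X] [OpensMeasurableSpace X] {s : Set X} {p : T → X}
    (hF : ∀ x ∈ s, AEStronglyMeasurable (F x) μ) (hcont : ∀ᵐ t ∂μ, ContinuousOn (F · t) s)
    (hp : AEMeasurable p μ) (hps : ∀ᵐ t ∂μ, p t ∈ s) :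
    AEStronglyMeasurable (fun t => F (p t) t) μ := by
  rcases s.eq_empty_or_nonempty with rfl | ⟨x₀, hx₀⟩
  · have hμ : μ = 0 := by simpa using hps
    simp [hμ]
  have hmk : ∀ᵐ t ∂μ, hp.mk p t ∈ s := by
    filter_upwards [hps, hp.ae_eq_mk] with t ht heq using heq ▸ ht
  let φ : ℕ → SimpleFunc T X := SimpleFunc.approxOn (hp.mk p) hp.measurable_mk s x₀ hx₀
  have hφs : ∀ n t, φ n t ∈ s := SimpleFunc.approxOn_mem hp.measurable_mk hx₀
  refine aestronglyMeasurable_of_tendsto_ae Filter.atTop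
    (fun n => aestronglyMeasurable_superposition_simpleFunc (φ n) fun t => hF _ (hφs n t)) ?_
  filter_upwards [hcont, hmk, hp.ae_eq_mk] with t hct hmkt heq
  rw [heq]
  have hlim : Filter.Tendsto (fun n => φ n t) Filter.atTop (nhdsWithin (hp.mk p t) s) :=
    tendsto_nhdsWithin_iff.2
      ⟨SimpleFunc.tendsto_approxOn hp.measurable_mk hx₀ (subset_closure hmkt),
        .of_forall fun n => hφs n t⟩
  exact (hct _ hmkt).tendsto.comp hlim

theorem ae_forall_mem_le [TopologicalSpace X] [SecondCountableTopology X] {K : Set X}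
    {φ : X → T → ℝ} {ψ : X → ℝ} (hφ : ∀ᵐ t ∂μ, ContinuousOn (φ · t) K) (hψ : ContinuousOn ψ K)
    (h : ∀ x ∈ K, ∀ᵐ t ∂μ, φ x t ≤ ψ x) : ∀ᵐ t ∂μ, ∀ x ∈ K, φ x t ≤ ψ x := by
  obtain ⟨D, hD, hDdense⟩ := TopologicalSpace.exists_countable_dense K
  have hall : ∀ᵐ t ∂μ, ∀ x ∈ D, φ x t ≤ ψ x := (ae_ball_iff hD).2 fun x _ => h x x.2
  filter_upwards [hφ, hall] with t hφt hDt x hx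
  have hclosed : IsClosed {y : K | φ y t ≤ ψ y} :=
    isClosed_le hφt.domRestrict hψ.domRestrict
  have hsub : closure D ⊆ {y : K | φ y t ≤ ψ y} := hclosed.closure_subset_iff.2 hDt
  exact hsub (hDdense.closure_eq ▸ mem_univ (⟨x, hx⟩ : K))

end Superposition

theorem ae_lipschitzOnWith {T X Y : Type*} [MeasurableSpace T] {μ : Measure T}
    [PseudoMetricSpace X] [SecondCountableTopology X] [PseudoMetricSpace Y] {F : X → T → Y}
    {K : Set X} {L : NNReal} (hcont : ∀ᵐ t ∂μ, ContinuousOn (F · t) K)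
    (h : ∀ x ∈ K, ∀ y ∈ K, ∀ᵐ t ∂μ, dist (F x t) (F y t) ≤ L * dist x y) :
    ∀ᵐ t ∂μ, LipschitzOnWith L (F · t) K := by
  have hpairs : ∀ᵐ t ∂μ, ∀ z : X × X, z ∈ K ×ˢ K → dist (F z.1 t) (F z.2 t) ≤ L * dist z.1 z.2 := by
    refine ae_forall_mem_le (φ := fun (z : X × X) t => dist (F z.1 t) (F z.2 t))
      (ψ := fun z => L * dist z.1 z.2) ?_ (by fun_prop) fun z hz => h z.1 hz.1 z.2 hz.2
    filter_upwards [hcont] with t ht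
    exact continuous_dist.comp_continuousOn
      ((ht.comp continuousOn_fst mapsTo_fst_prod).prodMk
        (ht.comp continuousOn_snd mapsTo_snd_prod))
  filter_upwards [hpairs] with t ht
  exact .of_dist_le_mul fun x hx y hy => ht (x, y) ⟨hx, hy⟩

theorem exists_ae_lipschitzOnWith_Icc {X Y : Type*} [SeminormedAddCommGroup X]
    [SecondCountableTopology X] [SeminormedAddCommGroup Y] {F : X → ℝ → Y} {B : Set X} {J : Set ℝ}
    {b s δ L : ℝ} (hδ : 0 < δ) (hbs : b < s) (hJ : Icc b s ⊆ J)
    (hcont : ∀ᵐ t ∂volume.restrict J, ContinuousOn (F · t) B)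
    (hL : ∀ x₁ ∈ B, ∀ x₂ ∈ B, ∀ᵐ t ∂volume.restrict (Icc (b - δ) (b + δ) ∩ J),
      ‖F x₂ t - F x₁ t‖ ≤ L * ‖x₂ - x₁‖) :
    ∃ c ∈ Ioc b s, ∀ᵐ t ∂volume.restrict (Icc b c), LipschitzOnWith L.toNNReal (F · t) B := by
  have hc : b < min s (b + δ) := lt_min hbs (by linarith)
  have hsub : Icc b (min s (b + δ)) ⊆ Icc (b - δ) (b + δ) ∩ J := fun t ht =>
    ⟨⟨by linarith [ht.1], ht.2.trans (min_le_right _ _)⟩,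
      hJ ⟨ht.1, ht.2.trans (min_le_left _ _)⟩⟩
  refine ⟨_, ⟨hc, min_le_left _ _⟩, ae_lipschitzOnWith
    (ae_restrict_of_ae_restrict_of_subset (hsub.trans inter_subset_right) hcont)
    fun x hx y hy => ?_⟩
  filter_upwards [ae_restrict_of_ae_restrict_of_subset hsub (hL y hy x hx)] with t ht
  rw [dist_eq_norm, dist_eq_norm]
  exact ht.trans (by gcongr; exact Real.le_coe_toNNReal L)

/-- `F` is a Carathéodory function on `K × s` bounded by `M`, the exceptional null set of times
being independent of the point of `K`. -/
structure BoundedCaratheodoryOn {X Y : Type*} [TopologicalSpace X] [NormedAddCommGroup Y]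
    (F : X → ℝ → Y) (K : Set X) (M : ℝ) (s : Set ℝ) : Prop where
  aestronglyMeasurable : ∀ x ∈ K, AEStronglyMeasurable (F x) (volume.restrict s)
  ae_continuousOn : ∀ᵐ t ∂volume.restrict s, ContinuousOn (F · t) K
  ae_norm_le : ∀ᵐ t ∂volume.restrict s, ∀ x ∈ K, ‖F x t‖ ≤ M

namespace BoundedCaratheodoryOn

variable {X Y : Type*} [NormedAddCommGroup Y] {F : X → ℝ → Y} {K : Set X} {M : ℝ} {s s' : Set ℝ}

theorem mono [TopologicalSpace X] (hF : BoundedCaratheodoryOn F K M s) (hs : s' ⊆ s) :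
    BoundedCaratheodoryOn F K M s' where
  aestronglyMeasurable x hx := (hF.aestronglyMeasurable x hx).mono_set hs
  ae_continuousOn := ae_restrict_of_ae_restrict_of_subset hs hF.ae_continuousOn
  ae_norm_le := ae_restrict_of_ae_restrict_of_subset hs hF.ae_norm_le

theorem of_forall_ae_norm_le [TopologicalSpace X] [SecondCountableTopology X]
    (hmeas : ∀ x ∈ K, AEStronglyMeasurable (F x) (volume.restrict s))
    (hcont : ∀ᵐ t ∂volume.restrict s, ContinuousOn (F · t) K)
    (hle : ∀ x ∈ K, ∀ᵐ t ∂volume.restrict s, ‖F x t‖ ≤ M) : BoundedCaratheodoryOn F K M s where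
  aestronglyMeasurable := hmeas
  ae_continuousOn := hcont
  ae_norm_le := ae_forall_mem_le (hcont.mono fun _ ht => ht.norm) continuousOn_const hle

theorem aeBoundedOn_comp [PseudoEMetricSpace X] [SecondCountableTopology X]
    (hF : BoundedCaratheodoryOn F K M s) (hs : MeasurableSet s) {p : ℝ → X}
    (hp : ContinuousOn p s) (hpK : MapsTo p s K) : AEBoundedOn (fun t => F (p t) t) M s where
  aestronglyMeasurable := by
    borelize X
    exact aestronglyMeasurable_superposition hF.aestronglyMeasurable hF.ae_continuousOn
      (hp.aemeasurable hs) (ae_restrict_of_forall_mem hs hpK)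
  ae_norm_le := by
    filter_upwards [hF.ae_norm_le, ae_restrict_mem hs] with t hFt ht
    exact hFt _ (hpK ht)

end BoundedCaratheodoryOn

/-! ### Local extension of solutions of the Volterra equation -/

/-- The multi-order Riemann–Liouville integral: the `i`-th component of `g` is integrated to the
order `α i`. -/
noncomputable def multiRLInt {ι : Type*} (a : ℝ) (α : ι → ℝ) (g : ℝ → EuclideanSpace ℝ ι)
    (t : ℝ) : EuclideanSpace ℝ ι :=
  WithLp.toLp 2 fun i => rlInt a (α i) (fun τ => g τ i) t

/-- The modulus of continuity, up to the factor `2 * M`, of the multi-order Riemann–Liouville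
integral of a function bounded by `M`. -/
noncomputable def rlModulus {ι : Type*} [Fintype ι] (α : ι → ℝ) (h : ℝ) : ℝ :=
  ∑ i, h ^ α i / Real.Gamma (α i + 1)

theorem euclidean_norm_le_sum_abs {ι : Type*} [Fintype ι] (x : EuclideanSpace ℝ ι) :
    ‖x‖ ≤ ∑ i, |x i| := by
  classical
  calc ‖x‖ = ‖∑ i, x i • EuclideanSpace.basisFun ι ℝ i‖ := by
        conv_lhs => rw [← (EuclideanSpace.basisFun ι ℝ).sum_repr x]
        rfl
    _ ≤ ∑ i, |x i| := (norm_sum_le _ _).trans_eq (by simp [norm_smul])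

section MultiRLInt

variable {ι : Type*} {a s t M N : ℝ} {α : ι → ℝ} {g g' : ℝ → EuclideanSpace ℝ ι}

theorem multiRLInt_congr (hat : a ≤ t) (h : EqOn g g' (Icc a t)) :
    multiRLInt a α g t = multiRLInt a α g' t := by
  ext i
  exact rlInt_congr hat (fun τ hτ => by rw [h hτ]) (α i)

theorem multiRLInt_self (hα : ∀ i, 0 < α i) (g : ℝ → EuclideanSpace ℝ ι) :
    multiRLInt a α g a = 0 := by
  ext i
  simp [multiRLInt, rlInt_of_pos (hα i)]

theorem multiRLInt_zero (hα : ∀ i, 0 < α i) : multiRLInt a α 0 t = 0 := by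
  ext i
  simp [multiRLInt, rlInt_of_pos (hα i)]

variable [Fintype ι]

theorem multiRLInt_sub (hα : ∀ i, 0 < α i) (hat : a ≤ t) (hg : AEBoundedOn g M (Icc a t))
    (hg' : AEBoundedOn g' N (Icc a t)) :
    multiRLInt a α (g - g') t = multiRLInt a α g t - multiRLInt a α g' t := by
  ext i
  exact rlInt_sub (hα i) hat (hg.apply i) (hg'.apply i)

theorem norm_multiRLInt_sub_le (hα : ∀ i, 0 < α i ∧ α i ≤ 1) (has : a ≤ s) (hst : s ≤ t)
    (hg : AEBoundedOn g M (Icc a t)) :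
    ‖multiRLInt a α g t - multiRLInt a α g s‖ ≤ 2 * M * rlModulus α (t - s) := by
  rw [rlModulus, Finset.mul_sum]
  exact (euclidean_norm_le_sum_abs _).trans (Finset.sum_le_sum fun i _ =>
    abs_rlInt_sub_rlInt_le (hα i).1 (hα i).2 has hst (hg.apply i))

theorem continuousOn_multiRLInt (hα : ∀ i, 0 < α i ∧ α i ≤ 1)
    (hg : AEBoundedOn g M (Icc a t)) : ContinuousOn (multiRLInt a α g) (Icc a t) :=
  (PiLp.continuous_toLp 2 _).comp_continuousOn <| continuousOn_pi.2 fun i =>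
    continuousOn_rlInt (hα i).1 (hα i).2 (hg.apply i)

theorem monotoneOn_rlModulus (hα : ∀ i, 0 < α i) : MonotoneOn (rlModulus α) (Ici 0) := by
  intro h (hh : 0 ≤ h) k _ hhk
  unfold rlModulus
  gcongr with i
  · exact (Real.Gamma_pos_of_pos (by linarith [hα i])).le
  · exact (hα i).le

theorem tendsto_rlModulus_zero (hα : ∀ i, 0 < α i) :
    Filter.Tendsto (rlModulus α) (nhds 0) (nhds 0) := by
  have hcont : Continuous (rlModulus α) := continuous_finsetSum _ fun i _ =>
    (Real.continuous_rpow_const (hα i).le).div_const _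
  simpa [rlModulus, Real.zero_rpow (hα _).ne'] using hcont.tendsto 0

theorem eventually_mul_rlModulus_le (hα : ∀ i, 0 < α i) (C : ℝ) {r : ℝ} (hr : 0 < r) :
    ∀ᶠ h in nhdsWithin 0 (Ioi 0), C * rlModulus α h ≤ r := by
  have hlim := ((tendsto_rlModulus_zero hα).const_mul C).mono_left
    (nhdsWithin_le_nhds (s := Ioi 0))
  rw [mul_zero] at hlim
  exact (hlim.eventually (gt_mem_nhds hr)).mono fun h hh => hh.le

end MultiRLInt

/-- `p` continues `q` continuously from `[a, b]` to `[a, c]` without leaving the closed ball of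
radius `r` about `q b` after time `b`. -/
structure IsContinuation {E : Type*} [PseudoMetricSpace E] (q : ℝ → E) (a b c r : ℝ) (p : ℝ → E) :
    Prop where
  continuousOn : ContinuousOn p (Icc a c)
  eqOn : EqOn p q (Icc a b)
  mapsTo : MapsTo p (Icc b c) (Metric.closedBall (q b) r)

namespace IsContinuation

variable {E : Type*} {a b c r : ℝ} {q p p' : ℝ → E}

section PseudoMetric

variable [PseudoMetricSpace E]

theorem congr (hp : IsContinuation q a b c r p) (hab : a ≤ b) (hbc : b ≤ c)
    (h : EqOn p' p (Icc a c)) : IsContinuation q a b c r p' where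
  continuousOn := hp.continuousOn.congr h
  eqOn := (h.mono (Icc_subset_Icc_right hbc)).trans hp.eqOn
  mapsTo := hp.mapsTo.congr (h.symm.mono (Icc_subset_Icc_left hab))

theorem mapsTo_of_subset {K : Set E} (hp : IsContinuation q a b c r p)
    (hqK : MapsTo q (Icc a b) K) (hball : Metric.closedBall (q b) r ⊆ K) :
    MapsTo p (Icc a c) K := by
  intro t ht
  rcases le_total t b with htb | hbt
  · exact hp.eqOn ⟨ht.1, htb⟩ ▸ hqK ⟨ht.1, htb⟩
  · exact hball (hp.mapsTo ⟨hbt, ht.2⟩)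

theorem of_continuousOn (hq : ContinuousOn q (Icc a b)) (hab : a ≤ b) (hr : 0 ≤ r) :
    IsContinuation q a b c r fun t => q (min t b) where
  continuousOn := hq.comp (by fun_prop) fun t ht => ⟨le_min ht.1 hab, min_le_right _ _⟩
  eqOn t ht := by simp only [min_eq_left ht.2]
  mapsTo t ht := by simpa only [min_eq_right ht.1] using Metric.mem_closedBall_self hr

end PseudoMetric

theorem isClosed_setOf_IccExtend [MetricSpace E] (hac : a ≤ c) :
    IsClosed {f : C(Icc a c, E) | IsContinuation q a b c r (IccExtend hac f)} := by
  have heval : ∀ t, Continuous fun f : C(Icc a c, E) => IccExtend hac f t := fun t =>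
    continuous_eval_const (projIcc a c hac t)
  have hset : {f : C(Icc a c, E) | IsContinuation q a b c r (IccExtend hac f)} =
      {f : C(Icc a c, E) | ∀ t ∈ Icc a b, IccExtend hac f t = q t} ∩
        {f : C(Icc a c, E) | ∀ t ∈ Icc b c, IccExtend hac f t ∈ Metric.closedBall (q b) r} := by
    ext f
    exact ⟨fun h => ⟨h.eqOn, h.mapsTo⟩, fun h => ⟨f.continuous.Icc_extend'.continuousOn, h.1, h.2⟩⟩
  rw [hset]
  simp only [ofPred_forall]
  exact (isClosed_biInter fun t _ => isClosed_eq (heval t) continuous_const).inter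
    (isClosed_biInter fun t _ => Metric.isClosed_closedBall.preimage (heval t))

theorem exists_eqOn_of_contracting [MetricSpace E] [CompleteSpace E] (hab : a ≤ b) (hbc : b ≤ c)
    (hr : 0 ≤ r) (hq : ContinuousOn q (Icc a b)) {T : (ℝ → E) → ℝ → E} {k : NNReal} (hk : k < 1)
    (hT : ∀ p, IsContinuation q a b c r p → IsContinuation q a b c r (T p))
    (hcontr : ∀ p p', IsContinuation q a b c r p → IsContinuation q a b c r p' → ∀ D,
      (∀ t ∈ Icc a c, dist (p t) (p' t) ≤ D) → ∀ t ∈ Icc a c, dist (T p t) (T p' t) ≤ k * D) :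
    ∃ p, IsContinuation q a b c r p ∧ EqOn (T p) p (Icc a c) := by
  have hac : a ≤ c := hab.trans hbc
  let S : Set C(Icc a c, E) := {f | IsContinuation q a b c r (IccExtend hac f)}
  have : CompleteSpace S := (isClosed_setOf_IccExtend hac).completeSpace_coe
  let bundle (p : ℝ → E) (hp : IsContinuation q a b c r p) : S :=
    ⟨⟨(Icc a c).domRestrict p, hp.continuousOn.domRestrict⟩, hp.congr hab hbc fun t ht => by
      simp [IccExtend_of_mem hac _ ht]⟩
  have : Nonempty S := ⟨bundle _ (of_continuousOn hq hab hr)⟩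
  let Φ : S → S := fun f => bundle (T (IccExtend hac f)) (hT _ f.2)
  have hΦ : ContractingWith k Φ := by
    refine ⟨hk, .of_dist_le_mul fun f g => ?_⟩
    rw [Subtype.dist_eq (Φ f), ContinuousMap.dist_le (by positivity)]
    exact fun t => hcontr _ _ f.2 g.2 _ (fun s _ => ContinuousMap.dist_apply_le_dist _) t t.2
  let f := hΦ.fixedPoint Φ
  refine ⟨IccExtend hac f, f.2, fun t ht => ?_⟩
  have hfix : (Φ f).1 ⟨t, ht⟩ = f.1 ⟨t, ht⟩ := by rw [hΦ.fixedPoint_isFixedPt.eq]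
  rw [IccExtend_of_mem hac _ ht]
  exact hfix

end IsContinuation

/-- The right-hand side of the Volterra equation `q = y₀ + I^α_{a+}[F(q(·), ·)]`, as an operator on
curves. -/
noncomputable def volterraMap {ι : Type*} (a : ℝ) (α : ι → ℝ) (y₀ : EuclideanSpace ℝ ι)
    (F : EuclideanSpace ℝ ι → ℝ → EuclideanSpace ℝ ι) (p : ℝ → EuclideanSpace ℝ ι) (t : ℝ) :
    EuclideanSpace ℝ ι :=
  y₀ + multiRLInt a α (fun τ => F (p τ) τ) t

section VolterraMap

variable {ι : Type*} {a b c r M : ℝ} {α : ι → ℝ} {y₀ : EuclideanSpace ℝ ι}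
  {F : EuclideanSpace ℝ ι → ℝ → EuclideanSpace ℝ ι} {p p' q : ℝ → EuclideanSpace ℝ ι}

theorem volterraMap_congr (h : EqOn p p' (Icc a b)) :
    EqOn (volterraMap a α y₀ F p) (volterraMap a α y₀ F p') (Icc a b) := fun t ht => by
  have hF : EqOn (fun τ => F (p τ) τ) (fun τ => F (p' τ) τ) (Icc a t) := fun τ hτ => by
    simp only [h ⟨hτ.1, hτ.2.trans ht.2⟩]
  rw [volterraMap, volterraMap, multiRLInt_congr ht.1 hF]

variable [Fintype ι]

theorem isContinuation_volterraMap (hα : ∀ i, 0 < α i ∧ α i ≤ 1) (hab : a ≤ b) (hbc : b < c)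
    (hq : EqOn (volterraMap a α y₀ F q) q (Icc a b)) (hp : IsContinuation q a b c r p)
    (hFp : AEBoundedOn (fun t => F (p t) t) M (Icc a c))
    (hr : 2 * M * rlModulus α (c - b) ≤ r) :
    IsContinuation q a b c r (volterraMap a α y₀ F p) where
  continuousOn := continuousOn_const.add (continuousOn_multiRLInt hα hFp)
  eqOn := (volterraMap_congr hp.eqOn).trans hq
  mapsTo t ht := by
    have hM : 0 ≤ M := hFp.nonneg (hab.trans_lt hbc)
    have hqb : q b = volterraMap a α y₀ F p b :=
      (((volterraMap_congr hp.eqOn).trans hq) (right_mem_Icc.2 hab)).symm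
    rw [hqb, mem_closedBall_iff_norm, volterraMap, volterraMap, add_sub_add_left_eq_sub]
    calc _ ≤ 2 * M * rlModulus α (t - b) :=
          norm_multiRLInt_sub_le hα hab ht.1 (hFp.mono (Icc_subset_Icc_right ht.2))
      _ ≤ 2 * M * rlModulus α (c - b) := by
          gcongr
          exact monotoneOn_rlModulus (fun i => (hα i).1) (sub_nonneg.2 ht.1)
            (sub_nonneg.2 hbc.le) (sub_le_sub_right ht.2 b)
      _ ≤ r := hr

theorem IsContinuation.aeBoundedOn_sub {N D : ℝ} {L : NNReal} (hD : 0 ≤ D)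
    (hp : IsContinuation q a b c r p) (hp' : IsContinuation q a b c r p')
    (hFp : AEBoundedOn (fun t => F (p t) t) M (Icc a c))
    (hFp' : AEBoundedOn (fun t => F (p' t) t) N (Icc a c))
    (hL : ∀ᵐ t ∂volume.restrict (Icc b c), LipschitzOnWith L (F · t) (Metric.closedBall (q b) r))
    (hpp' : ∀ t ∈ Icc a c, dist (p t) (p' t) ≤ D) :
    AEBoundedOn ((fun t => F (p t) t) - fun t => F (p' t) t) (L * D) (Icc a c) where
  aestronglyMeasurable := hFp.aestronglyMeasurable.sub hFp'.aestronglyMeasurable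
  ae_norm_le := by
    rw [ae_restrict_iff' measurableSet_Icc] at hL ⊢
    filter_upwards [hL] with t hLt ht
    rw [Pi.sub_apply, ← dist_eq_norm]
    rcases le_total t b with htb | hbt
    · have htab : t ∈ Icc a b := ⟨ht.1, htb⟩
      rw [hp.eqOn htab, hp'.eqOn htab, dist_self]
      positivity
    · have htbc : t ∈ Icc b c := ⟨hbt, ht.2⟩
      exact ((hLt htbc).dist_le_mul _ (hp.mapsTo htbc) _ (hp'.mapsTo htbc)).trans
        (by gcongr; exact hpp' t ht)

theorem dist_volterraMap_le {N D : ℝ} {L : NNReal} (hα : ∀ i, 0 < α i ∧ α i ≤ 1)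
    (hab : a ≤ b) (hbc : b ≤ c)
    (hp : IsContinuation q a b c r p) (hp' : IsContinuation q a b c r p')
    (hFp : AEBoundedOn (fun t => F (p t) t) M (Icc a c))
    (hFp' : AEBoundedOn (fun t => F (p' t) t) N (Icc a c))
    (hL : ∀ᵐ t ∂volume.restrict (Icc b c), LipschitzOnWith L (F · t) (Metric.closedBall (q b) r))
    (hpp' : ∀ t ∈ Icc a c, dist (p t) (p' t) ≤ D) :
    ∀ t ∈ Icc b c, dist (volterraMap a α y₀ F p t) (volterraMap a α y₀ F p' t) ≤
      2 * L * rlModulus α (c - b) * D := by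
  intro t ht
  have hα0 : ∀ i, 0 < α i := fun i => (hα i).1
  have hat : a ≤ t := hab.trans ht.1
  have hD : 0 ≤ D := dist_nonneg.trans (hpp' t ⟨hat, ht.2⟩)
  set w := (fun t => F (p t) t) - fun t => F (p' t) t with hw
  have hwb : multiRLInt a α w b = 0 := by
    rw [← multiRLInt_zero (a := a) (t := b) hα0]
    refine multiRLInt_congr hab fun τ hτ => ?_
    simp [w, hp.eqOn hτ, hp'.eqOn hτ]
  have hts : Icc a t ⊆ Icc a c := Icc_subset_Icc_right ht.2
  calc dist (volterraMap a α y₀ F p t) (volterraMap a α y₀ F p' t)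
      = ‖multiRLInt a α w t - multiRLInt a α w b‖ := by
        rw [hwb, sub_zero, hw, multiRLInt_sub hα0 hat (hFp.mono hts) (hFp'.mono hts), volterraMap,
          volterraMap, dist_add_left, dist_eq_norm]
    _ ≤ 2 * (L * D) * rlModulus α (t - b) :=
        norm_multiRLInt_sub_le hα hab ht.1
          ((hp.aeBoundedOn_sub hD hp' hFp hFp' hL hpp').mono hts)
    _ ≤ 2 * (L * D) * rlModulus α (c - b) := by
        gcongr
        exact monotoneOn_rlModulus hα0 (sub_nonneg.2 ht.1) (sub_nonneg.2 hbc)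
          (sub_le_sub_right ht.2 b)
    _ = 2 * L * rlModulus α (c - b) * D := by ring

theorem exists_extension_of_volterra {s R : ℝ} {K : Set (EuclideanSpace ℝ ι)} {L : NNReal}
    (hα : ∀ i, 0 < α i ∧ α i ≤ 1) (hab : a ≤ b) (hbs : b < s)
    (hF : BoundedCaratheodoryOn F K M (Icc a s)) (hqc : ContinuousOn q (Icc a b))
    (hqK : MapsTo q (Icc a b) K) (hR : 0 < R) (hball : Metric.closedBall (q b) R ⊆ K)
    (hL : ∀ᵐ t ∂volume.restrict (Icc b s), LipschitzOnWith L (F · t) (Metric.closedBall (q b) R))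
    (hq : EqOn (volterraMap a α y₀ F q) q (Icc a b)) :
    ∃ c ∈ Ioc b s, ∃ p, ContinuousOn p (Icc a c) ∧ EqOn p q (Icc a b) ∧ MapsTo p (Icc a c) K ∧
      EqOn (volterraMap a α y₀ F p) p (Icc a c) := by
  have hα0 : ∀ i, 0 < α i := fun i => (hα i).1
  obtain ⟨ε, ⟨hεM, hεL⟩, hε, hεs⟩ := (((eventually_mul_rlModulus_le hα0 (2 * M) hR).and
    (eventually_mul_rlModulus_le hα0 (2 * L) one_half_pos)).and
      (Ioc_mem_nhdsGT (sub_pos.2 hbs))).exists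
  obtain ⟨c, rfl⟩ : ∃ c, ε = c - b := ⟨b + ε, by ring⟩
  have hbc : b < c := sub_pos.1 hε
  have hcs : c ≤ s := by linarith
  have hbounded : ∀ p, IsContinuation q a b c R p →
      AEBoundedOn (fun t => F (p t) t) M (Icc a c) := fun p hp =>
    (hF.mono (Icc_subset_Icc_right hcs)).aeBoundedOn_comp measurableSet_Icc hp.continuousOn
      (hp.mapsTo_of_subset hqK hball)
  have hT : ∀ p, IsContinuation q a b c R p →
      IsContinuation q a b c R (volterraMap a α y₀ F p) := fun p hp =>
    isContinuation_volterraMap hα hab hbc hq hp (hbounded p hp) hεM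
  have hLc := ae_restrict_of_ae_restrict_of_subset (Icc_subset_Icc_right hcs) hL
  obtain ⟨p, hp, hfix⟩ := IsContinuation.exists_eqOn_of_contracting hab hbc.le hR.le
    hqc (k := 1 / 2) (NNReal.half_lt_self one_ne_zero) hT fun p p' hp hp' D hD t ht => by
      have hD0 : 0 ≤ D := dist_nonneg.trans (hD t ht)
      rcases le_total t b with htb | hbt
      · rw [(hT p hp).eqOn ⟨ht.1, htb⟩, (hT p' hp').eqOn ⟨ht.1, htb⟩, dist_self]
        positivity
      · exact (dist_volterraMap_le hα hab hbc.le hp hp' (hbounded p hp) (hbounded p' hp') hLc hD t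
          ⟨hbt, ht.2⟩).trans (mul_le_mul_of_nonneg_right (by simpa using hεL) hD0)
  exact ⟨c, ⟨hbc, hcs⟩, p, hp.continuousOn, hp.eqOn, hp.mapsTo_of_subset hqK hball, hfix⟩

end VolterraMap

/-! ### Solutions of the Caputo Cauchy problem -/

theorem isIntervalFrom_Icc {a b : ℝ} (hab : a < b) : IsIntervalFrom a (Icc a b) :=
  ⟨left_mem_Icc.2 hab.le, Icc_subset_Ici_self, by simpa [interior_Icc], ordConnected_Icc⟩

theorem IsIntervalFrom.exists_eq_Icc_or_eq_Ico {a : ℝ} {I J : Set ℝ} (hI : IsIntervalFrom a I)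
    (hJ : J.OrdConnected) (hJa : J ⊆ Ici a) (hIJ : I ⊆ J) (hne : I ≠ J) :
    ∃ b ∈ J, a < b ∧ ((I = Icc a b ∧ ∃ s ∈ J, b < s) ∨ I = Ico a b) := by
  obtain ⟨haI, hIa, hint, hIc⟩ := hI
  obtain ⟨s, hsJ, hsI⟩ := exists_of_ssubset (hIJ.ssubset_of_ne hne)
  have hIs : ∀ t ∈ I, t < s := fun t ht => by
    by_contra! hst
    exact hsI (hIc.out haI ht ⟨hJa hsJ, hst⟩)
  have hbdd : BddAbove I := ⟨s, fun t ht => (hIs t ht).le⟩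
  set b := sSup I
  have hIb : I ⊆ Icc a b := fun t ht => ⟨hIa ht, le_csSup hbdd ht⟩
  have hab : a < b := by
    simpa [interior_Icc] using hint.mono (interior_mono hIb)
  have hbJ : b ∈ J :=
    hJ.out (hIJ haI) hsJ ⟨hab.le, csSup_le ⟨a, haI⟩ fun t ht => (hIs t ht).le⟩
  have hIcoI : Ico a b ⊆ I := fun t ht => by
    obtain ⟨x, hxI, htx⟩ := exists_lt_of_lt_csSup ⟨a, haI⟩ ht.2
    exact hIc.out haI hxI ⟨ht.1, htx.le⟩
  refine ⟨b, hbJ, hab, ?_⟩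
  by_cases hbI : b ∈ I
  · exact .inl ⟨hIb.antisymm (hIc.out haI hbI), s, hsJ, hIs b hbI⟩
  · exact .inr (subset_antisymm
      (fun t ht => ⟨hIa ht, (hIb ht).2.lt_of_ne fun h => hbI (h ▸ ht)⟩) hIcoI)

section Caputo

variable {a b M : ℝ} {I If : Set ℝ} {m : ℕ} {Ω : Set (EuclideanSpace ℝ (Fin m))} {α : Fin m → ℝ}
  {qa : EuclideanSpace ℝ (Fin m)}
  {F : EuclideanSpace ℝ (Fin m) → ℝ → EuclideanSpace ℝ (Fin m)}
  {p q : ℝ → EuclideanSpace ℝ (Fin m)}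

theorem IsCaputoLocalSol.congr (hq : IsCaputoLocalSol a If Ω α qa F q I) (hpq : EqOn p q I) :
    IsCaputoLocalSol a If Ω α qa F p I := by
  obtain ⟨hI, hIIf, hqc, hqΩ, hqa, heq⟩ := hq
  have hmem : ∀ᵐ t ∂volume.restrict I, t ∈ I := ae_restrict_mem hI.2.2.2.measurableSet
  refine ⟨hI, hIIf, hqc.congr hpq, fun t ht => hpq ht ▸ hqΩ t ht, hpq hI.1 ▸ hqa, fun i => ?_⟩
  obtain ⟨c, h, hint, hrl, hF⟩ := heq i
  refine ⟨c, h, hint, ?_, ?_⟩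
  · filter_upwards [hrl, hmem] with t ht htI
    rw [← ht]
    refine rlInt_congr (hI.2.1 htI) (fun τ hτ => ?_) _
    rw [hpq (hI.2.2.2.out hI.1 htI hτ)]
  · filter_upwards [hF, hmem] with t ht htI
    rw [ht, hpq htI]

theorem IsCaputoLocalSol.exists_ae_rlInt_eq (hq : IsCaputoLocalSol a If Ω α qa F q I)
    (i : Fin m) : ∃ c : ℝ, ∀ᵐ t ∂volume.restrict I,
      rlInt a (1 - α i) (fun τ => q τ i - qa i) t = c + ∫ τ in a..t, F (q τ) τ i := by
  obtain ⟨hI, -, -, -, -, heq⟩ := hq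
  obtain ⟨c, h, -, hrl, hF⟩ := heq i
  refine ⟨c, ?_⟩
  filter_upwards [hrl, ae_restrict_mem hI.2.2.2.measurableSet] with t ht htI
  rw [ht, intervalIntegral.integral_congr_ae_restrict]
  rw [uIoc_of_le (hI.2.1 htI)]
  exact ae_restrict_of_ae_restrict_of_subset
    (Ioc_subset_Icc_self.trans (hI.2.2.2.out hI.1 htI)) hF

theorem IsCaputoLocalSol.eqOn_volterraMap (hα : ∀ i, 0 < α i ∧ α i ≤ 1)
    (hq : IsCaputoLocalSol a If Ω α qa F q (Icc a b))
    (hFq : AEBoundedOn (fun t => F (q t) t) M (Icc a b)) :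
    EqOn (volterraMap a α qa F q) q (Icc a b) := by
  have hab : a < b := by simpa [interior_Icc] using hq.1.2.2.1
  intro t ht
  ext i
  obtain ⟨c, hc⟩ := hq.exists_ae_rlInt_eq i
  obtain ⟨-, -, hqc, -, hqa, -⟩ := hq
  have hcont : ContinuousOn (fun τ => q τ i - qa i) (Icc a b) := by fun_prop
  have := eqOn_rlInt_of_ae_rlInt_one_sub_eq (hα i).1 (hα i).2 hab hcont (by simp [hqa])
    (hFq.apply i) hc ht
  simp [volterraMap, multiRLInt, ← this]

theorem isCaputoLocalSol_Icc_of_eqOn_volterraMap (hα : ∀ i, 0 < α i ∧ α i ≤ 1) (hab : a < b)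
    (hIf : Icc a b ⊆ If) (hqc : ContinuousOn q (Icc a b)) (hqΩ : MapsTo q (Icc a b) Ω)
    (hFq : AEBoundedOn (fun t => F (q t) t) M (Icc a b))
    (heq : EqOn (volterraMap a α qa F q) q (Icc a b)) :
    IsCaputoLocalSol a If Ω α qa F q (Icc a b) := by
  have hqa : q a = qa := by
    rw [← heq (left_mem_Icc.2 hab.le), volterraMap, multiRLInt_self fun i => (hα i).1, add_zero]
  refine ⟨isIntervalFrom_Icc hab, hIf, hqc, hqΩ, hqa, fun i => ?_⟩
  have hcomp : EqOn (fun τ => q τ i - qa i) (rlInt a (α i) fun τ => F (q τ) τ i) (Icc a b) :=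
    fun t ht => by simp [← heq ht, volterraMap, multiRLInt]
  refine ⟨0, fun t => F (q t) t i, fun t ht =>
    ((hFq.apply i).mono (Icc_subset_Icc_right ht.2)).integrableOn, ?_, .of_forall fun _ => rfl⟩
  refine ae_restrict_of_forall_mem measurableSet_Icc fun t ht => ?_
  rw [zero_add]
  exact rlInt_one_sub_eq_integral_of_eqOn_rlInt (hα i).1 (hα i).2 (hFq.apply i) hcomp t ht

theorem IsCaputoLocalSol.Icc_of_Ico (hq : IsCaputoLocalSol a If Ω α qa F q (Ico a b))
    (hb : b ∈ If) (hqc : ContinuousOn q (Icc a b)) (hqb : q b ∈ Ω)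
    (hFq : AEBoundedOn (fun t => F (q t) t) M (Icc a b)) :
    IsCaputoLocalSol a If Ω α qa F q (Icc a b) := by
  have hrl := hq.exists_ae_rlInt_eq
  obtain ⟨hI, hIIf, -, hqΩ, hqa, -⟩ := hq
  have hab : a < b := hI.1.2
  have hins : insert b (Ico a b) = Icc a b := Ico_insert_right hab.le
  refine ⟨isIntervalFrom_Icc hab, hins.symm.trans_subset (insert_subset hb hIIf), hqc, ?_, hqa,
    fun i => ?_⟩
  · rw [← hins]
    exact forall_mem_insert.2 ⟨hqb, hqΩ⟩
  obtain ⟨c, hc⟩ := hrl i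
  exact ⟨c, fun t => F (q t) t i, fun t ht =>
    ((hFq.apply i).mono (Icc_subset_Icc_right ht.2)).integrableOn,
    by rwa [← restrict_Ico_eq_restrict_Icc], .of_forall fun _ => rfl⟩

theorem IsCaputoLocalSol.update {ξ : EuclideanSpace ℝ (Fin m)}
    (hq : IsCaputoLocalSol a If Ω α qa F q (Ico a b)) (hb : b ∈ If) (hξ : ξ ∈ Ω)
    (hlim : Filter.Tendsto q (nhdsWithin b (Ico a b)) (nhds ξ))
    (hF : ∀ K ⊆ Ω, IsCompact K → ∃ M, BoundedCaratheodoryOn F K M (Icc a b)) :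
    IsCaputoLocalSol a If Ω α qa F (Function.update q b ξ) (Icc a b) := by
  set p := Function.update q b ξ
  have hpq : EqOn p q (Ico a b) := fun t ht => Function.update_of_ne ht.2.ne _ _
  have hpb : p b = ξ := Function.update_self _ _ _
  have hpc : ContinuousOn p (Icc a b) := by
    rw [continuousOn_update_iff, Icc_sdiff_right]
    exact ⟨hq.2.2.1, fun _ => hlim⟩
  have hp := hq.congr hpq
  have hpΩ : MapsTo p (Icc a b) Ω := fun t ht => by
    rcases ht.2.eq_or_lt with rfl | h
    · exact hpb ▸ hξ
    · exact hp.2.2.2.1 t ⟨ht.1, h⟩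
  obtain ⟨M, hM⟩ := hF _ hpΩ.image_subset (isCompact_Icc.image_of_continuousOn hpc)
  exact hp.Icc_of_Ico hb hpc (hpb ▸ hξ)
    (hM.aeBoundedOn_comp measurableSet_Icc hpc (mapsTo_image _ _))

theorem IsCaputoLocalSol.exists_extension {s R : ℝ} {L : NNReal} (hα : ∀ i, 0 < α i ∧ α i ≤ 1)
    (hq : IsCaputoLocalSol a If Ω α qa F q (Icc a b)) (hbs : b < s) (hIf : Icc a s ⊆ If)
    (hF : ∀ K ⊆ Ω, IsCompact K → ∃ M, BoundedCaratheodoryOn F K M (Icc a s))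
    (hR : 0 < R) (hball : Metric.closedBall (q b) R ⊆ Ω)
    (hL : ∀ᵐ t ∂volume.restrict (Icc b s),
      LipschitzOnWith L (F · t) (Metric.closedBall (q b) R)) :
    ∃ c > b, ∃ p, IsCaputoLocalSol a If Ω α qa F p (Icc a c) ∧ EqOn p q (Icc a b) := by
  have hab : a < b := by simpa [interior_Icc] using hq.1.2.2.1
  have hqc := hq.2.2.1
  set K := q '' Icc a b ∪ Metric.closedBall (q b) R
  have hKΩ : K ⊆ Ω := union_subset (image_subset_iff.2 hq.2.2.2.1) hball
  have hqK : MapsTo q (Icc a b) K := fun t ht => .inl (mem_image_of_mem q ht)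
  obtain ⟨M, hM⟩ := hF K hKΩ
    ((isCompact_Icc.image_of_continuousOn hqc).union (isCompact_closedBall _ _))
  have hbounded : ∀ {c p}, c ≤ s → ContinuousOn p (Icc a c) → MapsTo p (Icc a c) K →
      AEBoundedOn (fun t => F (p t) t) M (Icc a c) := fun hcs =>
    (hM.mono (Icc_subset_Icc_right hcs)).aeBoundedOn_comp measurableSet_Icc
  obtain ⟨c, ⟨hbc, hcs⟩, p, hpc, hpq, hpK, hp⟩ := exists_extension_of_volterra hα hab.le hbs hM
    hqc hqK hR subset_union_right hL (hq.eqOn_volterraMap hα (hbounded hbs.le hqc hqK))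
  exact ⟨c, hbc, p, isCaputoLocalSol_Icc_of_eqOn_volterraMap hα (hab.trans hbc)
    ((Icc_subset_Icc_right hcs).trans hIf) hpc (hpK.mono_right hKΩ) (hbounded hcs hpc hpK) hp, hpq⟩

end Caputo

theorem statement18 (a : ℝ) (If : Set ℝ)
    (haI : a ∈ If) (hIsub : If ⊆ Set.Ici a) (hIint : (interior If).Nonempty)
    (hIord : If.OrdConnected)
    (m : ℕ) (hm : 0 < m) (Ω : Set (EuclideanSpace ℝ (Fin m)))
    (hΩopen : IsOpen Ω) (hΩne : Ω.Nonempty)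
    (α : Fin m → ℝ) (hα : ∀ i, 0 < α i ∧ α i ≤ 1)
    (qa : EuclideanSpace ℝ (Fin m)) (hqa : qa ∈ Ω)
    (F : EuclideanSpace ℝ (Fin m) → ℝ → EuclideanSpace ℝ (Fin m))
    -- Carathéodory assumptions
    (hFmeas : ∀ x ∈ Ω, MeasureTheory.AEStronglyMeasurable (fun t => F x t)
      (MeasureTheory.volume.restrict If))
    (hFcont : ∀ᵐ t ∂(MeasureTheory.volume.restrict If), ContinuousOn (fun x => F x t) Ω)
    -- `F` is bounded on compacts
    (hbdd : ∀ K : Set (EuclideanSpace ℝ (Fin m)), K ⊆ Ω → IsCompact K →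
      ∀ c ∈ If, ∀ d ∈ If, c ≤ d → ∃ M : ℝ, 0 ≤ M ∧ ∀ x ∈ K,
        ∀ᵐ t ∂(MeasureTheory.volume.restrict (Set.Icc c d)), ‖F x t‖ ≤ M)
    -- `F` is locally Lipschitz continuous in its first variable
    (hlip : ∀ x ∈ Ω, ∀ t ∈ If, ∃ R > (0:ℝ), ∃ δ > (0:ℝ), ∃ L : ℝ, 0 ≤ L ∧
      Metric.closedBall x R ⊆ Ω ∧
      ∀ x₁ ∈ Metric.closedBall x R, ∀ x₂ ∈ Metric.closedBall x R,
        ∀ᵐ τ ∂(MeasureTheory.volume.restrict (Set.Icc (t - δ) (t + δ) ∩ If)),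
          ‖F x₂ τ - F x₁ τ‖ ≤ L * ‖x₂ - x₁‖) :
    ∀ (q : ℝ → EuclideanSpace ℝ (Fin m)) (I : Set ℝ),
      IsMaximalSol a If Ω α qa F q I → I ≠ If →
      ∃ b ∈ If, a < b ∧ I = Set.Ico a b ∧
        ¬ ∃ ξ ∈ Ω, Filter.Tendsto q (nhdsWithin b (Set.Ico a b)) (nhds ξ) := by
  rintro q I ⟨hsol, hmax⟩ hne
  have hF : ∀ d ∈ If, ∀ K ⊆ Ω, IsCompact K → ∃ M, BoundedCaratheodoryOn F K M (Icc a d) :=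
    fun d hd K hKΩ hK => by
      obtain ⟨M, -, hM⟩ := hbdd K hKΩ hK a haI d hd (hIsub hd)
      have hadIf : Icc a d ⊆ If := hIord.out haI hd
      exact ⟨M, .of_forall_ae_norm_le (fun x hx => (hFmeas x (hKΩ hx)).mono_set hadIf)
        ((ae_restrict_of_ae_restrict_of_subset hadIf hFcont).mono fun _ ht => ht.mono hKΩ) hM⟩
  obtain ⟨b, hb, hab, ⟨rfl, s, hs, hbs⟩ | rfl⟩ :=
    hsol.1.exists_eq_Icc_or_eq_Ico hIord hIsub hsol.2.1 hne
  · have hbsIf : Icc a s ⊆ If := hIord.out haI hs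
    obtain ⟨R, hR, δ, hδ, L, -, hball, hL⟩ := hlip (q b) (hsol.2.2.2.1 b ⟨hab.le, le_rfl⟩) b hb
    obtain ⟨d, ⟨hbd, hds⟩, hLip⟩ := exists_ae_lipschitzOnWith_Icc hδ hbs
      ((Icc_subset_Icc_left hab.le).trans hbsIf) (hFcont.mono fun _ ht => ht.mono hball) hL
    obtain ⟨c, hbc, p, hp, hpq⟩ := hsol.exists_extension hα hbd
      ((Icc_subset_Icc_right hds).trans hbsIf) (hF d (hbsIf ⟨(hab.trans hbd).le, hds⟩)) hR
      hball hLip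
    have hIcc := hmax p _ hp (Icc_subset_Icc_right hbc.le) hpq
    have hc : c ∈ Icc a b := hIcc ▸ right_mem_Icc.2 (hab.trans hbc).le
    exact absurd hc.2 hbc.not_ge
  · refine ⟨b, hb, hab, rfl, fun ⟨ξ, hξ, hlim⟩ => ?_⟩
    have hIcc := hmax _ _ (hsol.update hb hξ hlim (hF b hb)) Ico_subset_Icc_self
      fun t ht => Function.update_of_ne ht.2.ne _ _
    exact right_notMem_Ico (hIcc ▸ right_mem_Icc.2 hab.le)
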